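/- arXiv:0807.3632 — 2 statements merged into one kernel-verified Lean document; each statement's English description precedes it below -/
import Mathlib

section
/- Let G be a finite connected undirected graph on vertex set {1,…,n} with positive symmetric edge weights ω, let Δ be the negated weighted Laplacian of G and Δ₂ the matrix obtained from Δ by replacing its first row with the first row of the identity. Then for all vertices i and j, the effective resistance satisfies R_{ij} = Δ₂⁻¹(i,j) − Δ₂⁻¹(j,j) − Δ₂⁻¹(i,i) + Δ₂⁻¹(j,i). -/
open Finset

variable {V : Type*}

/-- The total weight incident to a vertex: `ω(i) = Σ_l ω(i,l)`. -/
noncomputable def vWeight [Fintype V] (w : V → V → ℝ) (i : V) : ℝ :=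
  ∑ l, w i l

/-- The total weight of the graph (each edge counted once): `ω(G)`. -/
noncomputable def gWeight [Fintype V] (w : V → V → ℝ) : ℝ :=
  (∑ i, ∑ l, w i l) / 2

/-- Transition probabilities of the random walk on the weighted graph:
from `i`, move to `l` with probability `ω(i,l)/ω(i)`. -/
noncomputable def walkStep [Fintype V] (w : V → V → ℝ) (i l : V) : ℝ :=
  w i l / vWeight w i

/-- `w` is a system of positive symmetric edge weights on a finite connected undirected
graph: symmetric, nonnegative, zero on the diagonal (and on non-edges), and the graph
whose edges are the pairs with positive weight is connected. -/
def IsWeight [Fintype V] (w : V → V → ℝ) : Prop :=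
  (∀ a b, w a b = w b a) ∧ (∀ a b, 0 ≤ w a b) ∧ (∀ a, w a a = 0) ∧
    (∀ a b, Relation.ReflTransGen (fun x y => 0 < w x y) a b)

/-- `hitSurv p j n i` is the probability that the Markov chain with transition kernel `p`
started at `i` has not visited `j` at any of the times `0, 1, …, n`. -/
noncomputable def hitSurv {S : Type*} [Fintype S] [DecidableEq S] (p : S → S → ℝ) (j : S) :
    ℕ → S → ℝ
  | 0 => fun i => if i = j then 0 else 1
  | n + 1 => fun i => if i = j then 0 else ∑ l, p i l * hitSurv p j n l

/-- Expected hitting time of `j` from `i`: the expected number of steps for the chain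
started at `i` to first reach `j`, computed as `Σ_n P(T_j > n)`. -/
noncomputable def hitTime {S : Type*} [Fintype S] [DecidableEq S] (p : S → S → ℝ)
    (i j : S) : ℝ :=
  ∑' n : ℕ, hitSurv p j n i

/-- A unit-current potential from `i` to `j`: Kirchhoff's equations when a unit current
enters at `i` and leaves at `j`. -/
def IsUnitPotential [Fintype V] (w : V → V → ℝ) (i j : V) (φ : V → ℝ) : Prop :=
  (∀ k, k ≠ i → k ≠ j → ∑ l, w k l * (φ k - φ l) = 0) ∧
    (∑ l, w i l * (φ i - φ l) = 1) ∧
    (∑ l, w j l * (φ j - φ l) = -1)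

/-- `R` is the effective-resistance matrix of the weighted graph `w`:
`R a a = 0`, and for `a ≠ b`, `R a b = V_a - V_b` for a unit-current potential
from `a` to `b`. -/
def IsResistance [Fintype V] (w : V → V → ℝ) (R : V → V → ℝ) : Prop :=
  (∀ a, R a a = 0) ∧
    ∀ a b, a ≠ b → ∃ φ, IsUnitPotential w a b φ ∧ R a b = φ a - φ b

/-- The weight function of an unweighted graph: weight `1` on edges, `0` elsewhere. -/
noncomputable def aw (G : SimpleGraph V) [DecidableRel G.Adj] (a b : V) : ℝ :=
  if G.Adj a b then 1 else 0

/-- Probability of a given trajectory: `trajProb p i xs` is the probability that the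
chain started at `i` successively visits the vertices of the list `xs`. -/
noncomputable def trajProb {S : Type*} [Fintype S] (p : S → S → ℝ) : S → List S → ℝ
  | _, [] => 1
  | i, x :: xs => p i x * trajProb p x xs

/-- Probability that the walk started at `i` has not visited every vertex by time `n`. -/
noncomputable def notCoveredProb [Fintype V] [DecidableEq V] (p : V → V → ℝ) (n : ℕ)
    (i : V) : ℝ :=
  ∑ xs : Fin n → V, trajProb p i (List.ofFn xs) *
    (if (i :: List.ofFn xs).toFinset = Finset.univ then 0 else 1)

/-- The cover time from `i`: the expected number of steps for the walk started at `i`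
to have visited every vertex, computed as `Σ_n P(T_cov > n)`. -/
noncomputable def coverTime [Fintype V] [DecidableEq V] (p : V → V → ℝ) (i : V) : ℝ :=
  ∑' n : ℕ, notCoveredProb p n i

/-- `visitSurv p j k n i` is the probability that the chain started at `i` is at `k` at
time `n` without having visited `j` at any of the times `0, …, n`. -/
noncomputable def visitSurv [Fintype V] [DecidableEq V] (p : V → V → ℝ) (j k : V) :
    ℕ → V → ℝ
  | 0 => fun i => if i = j then 0 else if i = k then 1 else 0
  | n + 1 => fun i => if i = j then 0 else ∑ l, p i l * visitSurv p j k n l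

/-- `expVisits p i j k` is the expected number of visits to `k` (counting time `0`) of
the chain started at `i` strictly before its first visit to `j`. -/
noncomputable def expVisits [Fintype V] [DecidableEq V] (p : V → V → ℝ) (i j k : V) : ℝ :=
  ∑' n : ℕ, visitSurv p j k n i

/-- `reachBeforeAux p i j n l` is the probability that the walk started at `l` reaches `j`
within `n` steps without visiting `i` first. -/
noncomputable def reachBeforeAux [Fintype V] [DecidableEq V] (p : V → V → ℝ) (i j : V) :
    ℕ → V → ℝ
  | 0 => fun l => if l = j then 1 else 0
  | n + 1 => fun l =>
      if l = j then 1 else if l = i then 0 else ∑ m, p l m * reachBeforeAux p i j n m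

/-- The probability that the walk started at `i` reaches `j` before returning to `i`:
one step from `i` to `l`, then reach `j` before `i` (monotone limit in `n`). -/
noncomputable def escapeProb [Fintype V] [DecidableEq V] (p : V → V → ℝ) (i j : V) : ℝ :=
  ∑ l, p i l * ⨆ n, reachBeforeAux p i j n l

/-- `hitSurvSet p F n x` is the probability that the chain started at `x` has not visited
the set `F` at any of the times `0, …, n`. -/
noncomputable def hitSurvSet {S : Type*} [Fintype S] (p : S → S → ℝ) (F : S → Prop)
    [DecidablePred F] : ℕ → S → ℝ
  | 0 => fun x => if F x then 0 else 1
  | n + 1 => fun x => if F x then 0 else ∑ y, p x y * hitSurvSet p F n y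

/-- Expected hitting time of the set `F` from `x`, computed as `Σ_n P(T_F > n)`. -/
noncomputable def hitTimeSet {S : Type*} [Fintype S] (p : S → S → ℝ) (F : S → Prop)
    [DecidablePred F] (x : S) : ℝ :=
  ∑' n : ℕ, hitSurvSet p F n x

/-- The associated chain `𝒢` on pairs `(P, i)` (visited set, current vertex): from
`(P, i)` it moves to `(P ∪ {j}, j)` with probability `ω(i,j)/ω(i)`. -/
noncomputable def pairStep [Fintype V] [DecidableEq V] (w : V → V → ℝ)
    (s t : Finset V × V) : ℝ :=
  if t.1 = insert t.2 s.1 then walkStep w s.2 t.2 else 0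

/-- `exitProbAux p P j n i` is the probability that the walk started at `i` leaves `P`
within `n` steps and that the first vertex visited outside `P` is `j`. -/
noncomputable def exitProbAux [Fintype V] [DecidableEq V] (p : V → V → ℝ) (P : Finset V)
    (j : V) : ℕ → V → ℝ
  | 0 => fun i => if i ∈ P then 0 else if i = j then 1 else 0
  | n + 1 => fun i =>
      if i ∈ P then ∑ l, p i l * exitProbAux p P j n l else if i = j then 1 else 0

/-- The probability that the first vertex outside `P` visited by the walk started at `i`
is `j` (monotone limit in the number of allowed steps). -/
noncomputable def exitProb [Fintype V] [DecidableEq V] (p : V → V → ℝ) (P : Finset V)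
    (i j : V) : ℝ :=
  ⨆ n, exitProbAux p P j n i

/-- The negated weighted Laplacian `Δ` of the weighted graph `w` on `Fin n`. -/
noncomputable def negLaplacian (n : ℕ) (w : Fin n → Fin n → ℝ) :
    Matrix (Fin n) (Fin n) ℝ :=
  Matrix.of fun k l => if k = l then -(∑ m, w k m) else w k l

/-- `Δ₂`: the negated weighted Laplacian with its first row replaced by the first row of
the identity matrix. -/
noncomputable def delta2 (n : ℕ) (hn : 0 < n) (w : Fin n → Fin n → ℝ) :
    Matrix (Fin n) (Fin n) ℝ :=
  (negLaplacian n w).updateRow ⟨0, hn⟩ (fun l => if l = ⟨0, hn⟩ then 1 else 0)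

/-- The weight function obtained from `w` by adding weight `u` on the edge `{a, b}`. -/
noncomputable def addEdge [DecidableEq V] (w : V → V → ℝ) (a b : V) (u : ℝ)
    (x y : V) : ℝ :=
  w x y + (if (x = a ∧ y = b) ∨ (x = b ∧ y = a) then u else 0)

/-!
`Δ x` at `k` is a nonnegative combination of the differences `x l - x k`, so a maximum of a function
subharmonic off a vertex `r` propagates along positive weights until it reaches `r`. Hence a
function harmonic off `r` is constant, which makes `Δ` with row `r` replaced by `e_r` invertible.
If `Δ x = b`, then `x` and the solution `y` of the grounded system with right-hand side `b` have
the same Laplacian off `r`, so `x - y` is constant and the potential differences of `x` are those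
of `y`. A unit-current potential is the case `b = e_j - e_i`.
-/

section GroundedLaplacian

open Matrix Relation

variable {K : Type*} [Fintype V] [DecidableEq V]

/-- The negated Laplacian of an arbitrary, possibly asymmetric weight function `w`, acting by
`x ↦ fun k => ∑ l, w k l * (x l - x k)`. The row sums include the loops `w k k`, which therefore
cancel on the diagonal. -/
def weightedNegLaplacian [Ring K] (w : V → V → K) : Matrix V V K :=
  of w - diagonal fun k => ∑ l, w k l

/-- The negated Laplacian grounded at `r`: the equation at `r` is replaced by one prescribing the
value at `r`. The row of `r` is overwritten, not deleted, so the matrix is still indexed by `V`. -/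
def groundedNegLaplacian [Ring K] (w : V → V → K) (r : V) : Matrix V V K :=
  (weightedNegLaplacian w).updateRow r (Pi.single r 1)

theorem weightedNegLaplacian_mulVec_apply [Ring K] (w : V → V → K) (x : V → K) (k : V) :
    (weightedNegLaplacian w *ᵥ x) k = ∑ l, w k l * (x l - x k) := by
  rw [weightedNegLaplacian, sub_mulVec, Pi.sub_apply, mulVec_diagonal]
  simp only [mulVec, dotProduct, of_apply, mul_sub, sum_sub_distrib, sum_mul]

theorem groundedNegLaplacian_mulVec [Ring K] (w : V → V → K) (r : V) (x : V → K) :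
    groundedNegLaplacian w r *ᵥ x = Function.update (weightedNegLaplacian w *ᵥ x) r (x r) := by
  rw [groundedNegLaplacian, updateRow_mulVec, single_one_dotProduct]

section MaximumPrinciple

variable [Ring K] [LinearOrder K] [IsStrictOrderedRing K] {w : V → V → K} {r : V} {x : V → K}

theorem eq_of_forall_le_of_weightedNegLaplacian_mulVec_nonneg {a c : V}
    (hw : ∀ l, 0 ≤ w a l) (hmax : ∀ b, x b ≤ x a) (ha : 0 ≤ (weightedNegLaplacian w *ᵥ x) a)
    (hac : 0 < w a c) : x c = x a := by
  have hterm : ∀ l ∈ univ, w a l * (x l - x a) ≤ 0 := fun l _ =>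
    mul_nonpos_of_nonneg_of_nonpos (hw l) (sub_nonpos.2 (hmax l))
  rw [weightedNegLaplacian_mulVec_apply] at ha
  have hzero := (sum_eq_zero_iff_of_nonpos hterm).1 ((sum_nonpos hterm).antisymm ha) c (mem_univ c)
  exact sub_eq_zero.1 ((mul_eq_zero.1 hzero).resolve_left hac.ne')

theorem le_of_weightedNegLaplacian_mulVec_nonneg (hw : ∀ k l, 0 ≤ w k l)
    (hr : ∀ k, ReflTransGen (fun a b => 0 < w a b) k r)
    (hx : ∀ k, k ≠ r → 0 ≤ (weightedNegLaplacian w *ᵥ x) k) (k : V) : x k ≤ x r := by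
  obtain ⟨m, -, hm⟩ := exists_max_image univ x ⟨k, mem_univ k⟩
  suffices hpath : ∀ a, ReflTransGen (fun a b => 0 < w a b) a r → (∀ b, x b ≤ x a) → x a ≤ x r from
    (hm k (mem_univ k)).trans (hpath m (hr m) fun b => hm b (mem_univ b))
  intro a har
  induction har using ReflTransGen.head_induction_on with
  | refl => exact fun _ => le_rfl
  | @head a c hac _ ih =>
    intro hmax
    by_cases ha : a = r
    · rw [ha]
    · have hca := eq_of_forall_le_of_weightedNegLaplacian_mulVec_nonneg (hw a) hmax (hx a ha) hac
      rw [← hca] at hmax ⊢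
      exact ih hmax

theorem eq_of_weightedNegLaplacian_mulVec_eq_zero (hw : ∀ k l, 0 ≤ w k l)
    (hr : ∀ k, ReflTransGen (fun a b => 0 < w a b) k r)
    (hx : ∀ k, k ≠ r → (weightedNegLaplacian w *ᵥ x) k = 0) (k : V) : x k = x r := by
  refine (le_of_weightedNegLaplacian_mulVec_nonneg hw hr (fun k hk => (hx k hk).ge) k).antisymm ?_
  refine neg_le_neg_iff.1 (le_of_weightedNegLaplacian_mulVec_nonneg (x := -x) hw hr ?_ k)
  intro k hk
  rw [mulVec_neg, Pi.neg_apply, hx k hk, neg_zero]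

end MaximumPrinciple

section Inverse

variable [Field K] [LinearOrder K] [IsStrictOrderedRing K] {w : V → V → K} {r : V}

theorem isUnit_groundedNegLaplacian (hw : ∀ k l, 0 ≤ w k l)
    (hr : ∀ k, ReflTransGen (fun a b => 0 < w a b) k r) : IsUnit (groundedNegLaplacian w r) := by
  refine mulVec_injective_iff_isUnit.1
    ((injective_iff_map_eq_zero (groundedNegLaplacian w r).mulVecLin).2 fun x hx => ?_)
  rw [mulVecLin_apply, groundedNegLaplacian_mulVec] at hx
  have hxr : x r = 0 := by simpa using congrFun hx r
  have hharm : ∀ k, k ≠ r → (weightedNegLaplacian w *ᵥ x) k = 0 := fun k hk => by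
    simpa [hk] using congrFun hx k
  exact funext fun k => (eq_of_weightedNegLaplacian_mulVec_eq_zero hw hr hharm k).trans hxr

theorem sub_eq_inv_groundedNegLaplacian_mulVec_sub (hw : ∀ k l, 0 ≤ w k l)
    (hr : ∀ k, ReflTransGen (fun a b => 0 < w a b) k r) {x b : V → K}
    (hx : weightedNegLaplacian w *ᵥ x = b) (k l : V) :
    x k - x l =
      ((groundedNegLaplacian w r)⁻¹ *ᵥ b) k - ((groundedNegLaplacian w r)⁻¹ *ᵥ b) l := by
  set y := (groundedNegLaplacian w r)⁻¹ *ᵥ b with hy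
  have hgrounded : groundedNegLaplacian w r *ᵥ y = b := by
    rw [hy, mulVec_mulVec,
      mul_nonsing_inv _ ((isUnit_iff_isUnit_det _).1 (isUnit_groundedNegLaplacian hw hr)),
      one_mulVec]
  have hharm : ∀ v, v ≠ r → (weightedNegLaplacian w *ᵥ (x - y)) v = 0 := fun v hv => by
    have hyv := congrFun hgrounded v
    rw [groundedNegLaplacian_mulVec, Function.update_of_ne hv] at hyv
    rw [mulVec_sub, Pi.sub_apply, hx, hyv, sub_self]
  have hconst := eq_of_weightedNegLaplacian_mulVec_eq_zero hw hr hharm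
  exact sub_eq_sub_iff_sub_eq_sub.1 ((hconst k).trans (hconst l).symm)

end Inverse

theorem IsUnitPotential.weightedNegLaplacian_mulVec {w : V → V → ℝ} {i j : V} {φ : V → ℝ}
    (hφ : IsUnitPotential w i j φ) (hij : i ≠ j) :
    weightedNegLaplacian w *ᵥ φ = Pi.single j 1 - Pi.single i 1 := by
  obtain ⟨hother, hi, hj⟩ := hφ
  funext k
  have hneg : (weightedNegLaplacian w *ᵥ φ) k = -∑ l, w k l * (φ k - φ l) := by
    simp only [weightedNegLaplacian_mulVec_apply, ← sum_neg_distrib, ← mul_neg, neg_sub]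
  rw [hneg]
  rcases eq_or_ne k i with rfl | hki
  · simp [hi, hij]
  rcases eq_or_ne k j with rfl | hkj
  · simp [hj, hki]
  · simp [hother k hki hkj, hki, hkj]

theorem resistance_from_delta2_inverse_general {w : V → V → ℝ} {r : V} (hw : ∀ k l, 0 ≤ w k l)
    (hr : ∀ k, ReflTransGen (fun a b => 0 < w a b) k r) {R : V → V → ℝ} (hR : IsResistance w R)
    (i j : V) :
    R i j = (groundedNegLaplacian w r)⁻¹ i j - (groundedNegLaplacian w r)⁻¹ j j
      - (groundedNegLaplacian w r)⁻¹ i i + (groundedNegLaplacian w r)⁻¹ j i := by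
  rcases eq_or_ne i j with rfl | hij
  · rw [hR.1]
    ring
  obtain ⟨φ, hφ, hRφ⟩ := hR.2 i j hij
  rw [hRφ, sub_eq_inv_groundedNegLaplacian_mulVec_sub hw hr (hφ.weightedNegLaplacian_mulVec hij)]
  simp only [mulVec_sub, mulVec_single_one, Pi.sub_apply, col_apply]
  ring

end GroundedLaplacian

theorem negLaplacian_eq_weightedNegLaplacian {n : ℕ} {w : Fin n → Fin n → ℝ}
    (hdiag : ∀ k, w k k = 0) : negLaplacian n w = weightedNegLaplacian w := by
  ext k l
  rcases eq_or_ne k l with rfl | hkl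
  · simp [negLaplacian, weightedNegLaplacian, hdiag]
  · simp [negLaplacian, weightedNegLaplacian, hkl]

theorem delta2_eq_groundedNegLaplacian {n : ℕ} (hn : 0 < n) {w : Fin n → Fin n → ℝ}
    (hdiag : ∀ k, w k k = 0) : delta2 n hn w = groundedNegLaplacian w ⟨0, hn⟩ := by
  rw [delta2, groundedNegLaplacian, negLaplacian_eq_weightedNegLaplacian hdiag]
  congr 1
  ext l
  rw [Pi.single_apply]

/-- The effective resistance is given by the entries of `Δ₂⁻¹`:
`R_{ij} = Δ₂⁻¹(i,j) − Δ₂⁻¹(j,j) − Δ₂⁻¹(i,i) + Δ₂⁻¹(j,i)`. -/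
theorem resistance_from_delta2_inverse (n : ℕ) (hn : 0 < n) (w : Fin n → Fin n → ℝ)
    (hw : IsWeight w) (R : Fin n → Fin n → ℝ) (hR : IsResistance w R) (i j : Fin n) :
    R i j = (delta2 n hn w)⁻¹ i j - (delta2 n hn w)⁻¹ j j
      - (delta2 n hn w)⁻¹ i i + (delta2 n hn w)⁻¹ j i := by
  rw [delta2_eq_groundedNegLaplacian hn hw.2.2.1]
  exact resistance_from_delta2_inverse_general hw.2.1 (fun k => hw.2.2.2 k _) hR i j
end

section
/- Let G = (V,E) be a finite connected undirected graph with positive symmetric edge weights ω, and let G' be the weighted graph obtained from G by adding a new edge {a,b} of weight w > 0 (or by increasing the weight of an existing edge {a,b} by w). Then for all vertices i and j, the effective resistance in G' is at most that in G: R'_{ij} ≤ R_{ij} (Rayleigh monotonicity). -/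
open Finset

variable {V : Type*}

/-! Let `E_w(f, g)` be the Dirichlet form of the weight function `w`. Summation by parts turns
Kirchhoff's equations for a unit-current potential `φ` from `i` to `j` into `E_w(φ, g) = g i - g j`
for all `g`. Expanding `0 ≤ E_w(φ - g, φ - g)` then gives the variational characterisation
`R i j = max_g (2 (g i - g j) - E_w(g, g))`, attained at `φ`, and the expression being maximised
cannot increase when weights grow. -/

section Dirichlet

variable [Fintype V] {w w' : V → V → ℝ}

/-- The Dirichlet form `E_w(f, g) = ½ Σ_{k,l} ω(k,l) (f k - f l) (g k - g l)` of a weight function;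
`E_w(f, f)` is the energy of `f`. The half compensates for summing over ordered pairs. -/
noncomputable def dirichletForm (w : V → V → ℝ) : LinearMap.BilinForm ℝ (V → ℝ) :=
  let coord (k : V) : Module.Dual ℝ (V → ℝ) := LinearMap.proj k
  (2⁻¹ : ℝ) • ∑ k, ∑ l, w k l •
    LinearMap.BilinForm.linMulLin (coord k - coord l) (coord k - coord l)

theorem dirichletForm_apply (w : V → V → ℝ) (f g : V → ℝ) :
    dirichletForm w f g = 2⁻¹ * ∑ k, ∑ l, w k l * ((f k - f l) * (g k - g l)) := by
  simp [dirichletForm]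

theorem isSymm_dirichletForm (w : V → V → ℝ) : (dirichletForm w).IsSymm :=
  ⟨fun f g => by simp only [dirichletForm_apply, mul_comm (f _ - f _)]⟩

theorem dirichletForm_self_mono (hle : w ≤ w') (f : V → ℝ) :
    dirichletForm w f f ≤ dirichletForm w' f f := by
  simp only [dirichletForm_apply]
  gcongr with k _ l _
  · exact mul_self_nonneg _
  · exact hle k l

theorem dirichletForm_self_nonneg (hw : 0 ≤ w) (f : V → ℝ) : 0 ≤ dirichletForm w f f := by
  simpa [dirichletForm_apply] using dirichletForm_self_mono hw f

theorem sum_mul_sum_mul_sub_eq_dirichletForm (hsymm : ∀ x y, w x y = w y x) (f g : V → ℝ) :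
    ∑ k, g k * ∑ l, w k l * (f k - f l) = dirichletForm w f g := by
  have hswap : ∑ k, ∑ l, g k * (w k l * (f k - f l)) = ∑ k, ∑ l, g l * (w k l * (f l - f k)) := by
    rw [sum_comm]
    exact sum_congr rfl fun k _ => sum_congr rfl fun l _ => by rw [hsymm]
  calc ∑ k, g k * ∑ l, w k l * (f k - f l)
    _ = ∑ k, ∑ l, g k * (w k l * (f k - f l)) := by simp only [mul_sum]
    _ = 2⁻¹ * (∑ k, ∑ l, g k * (w k l * (f k - f l)) +
          ∑ k, ∑ l, g l * (w k l * (f l - f k))) := by rw [← hswap]; ring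
    _ = 2⁻¹ * ∑ k, ∑ l, w k l * ((f k - f l) * (g k - g l)) := by
      simp only [← sum_add_distrib]
      exact congrArg _ (sum_congr rfl fun k _ => sum_congr rfl fun l _ => by ring)
    _ = dirichletForm w f g := (dirichletForm_apply w f g).symm

namespace IsUnitPotential

variable {i j : V} {φ ψ : V → ℝ}

theorem ne (hφ : IsUnitPotential w i j φ) : i ≠ j := by
  rintro rfl
  linarith [hφ.2.1, hφ.2.2]

theorem dirichletForm_eq_sub (hφ : IsUnitPotential w i j φ) (hsymm : ∀ x y, w x y = w y x)
    (g : V → ℝ) : dirichletForm w φ g = g i - g j := by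
  classical
  have hij := hφ.ne
  obtain ⟨hinterior, hsource, hsink⟩ := hφ
  rw [← sum_mul_sum_mul_sub_eq_dirichletForm hsymm,
    Fintype.sum_eq_add i j hij fun k hk => by rw [hinterior k hk.1 hk.2, mul_zero],
    hsource, hsink]
  ring

theorem two_mul_sub_sub_dirichletForm_le (hφ : IsUnitPotential w i j φ)
    (hsymm : ∀ x y, w x y = w y x) (hw : 0 ≤ w) (g : V → ℝ) :
    2 * (g i - g j) - dirichletForm w g g ≤ φ i - φ j := by
  have hexpand : dirichletForm w (φ - g) (φ - g) =
      (φ i - φ j) - 2 * (g i - g j) + dirichletForm w g g := by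
    simp only [map_sub, LinearMap.sub_apply, (isSymm_dirichletForm w).eq g φ,
      hφ.dirichletForm_eq_sub hsymm]
    ring
  linarith [dirichletForm_self_nonneg hw (φ - g)]

theorem sub_le_sub_of_le (hφ : IsUnitPotential w i j φ) (hψ : IsUnitPotential w' i j ψ)
    (hsymm : ∀ x y, w x y = w y x) (hsymm' : ∀ x y, w' x y = w' y x) (hw : 0 ≤ w)
    (hle : w ≤ w') : ψ i - ψ j ≤ φ i - φ j :=
  calc ψ i - ψ j
    _ = 2 * (ψ i - ψ j) - dirichletForm w' ψ ψ := by
      rw [hψ.dirichletForm_eq_sub hsymm']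
      ring
    _ ≤ 2 * (ψ i - ψ j) - dirichletForm w ψ ψ := by
      gcongr
      exact dirichletForm_self_mono hle ψ
    _ ≤ φ i - φ j := hφ.two_mul_sub_sub_dirichletForm_le hsymm hw ψ

end IsUnitPotential

theorem rayleigh_monotonicity_general (hsymm : ∀ x y, w x y = w y x)
    (hsymm' : ∀ x y, w' x y = w' y x) (hw : 0 ≤ w) (hle : w ≤ w') {R R' : V → V → ℝ}
    (hR : IsResistance w R) (hR' : IsResistance w' R') : R' ≤ R := by
  intro i j
  rcases eq_or_ne i j with rfl | hij
  · rw [hR.1, hR'.1]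
  · obtain ⟨φ, hφ, hRφ⟩ := hR.2 i j hij
    obtain ⟨ψ, hψ, hRψ⟩ := hR'.2 i j hij
    rw [hRφ, hRψ]
    exact hφ.sub_le_sub_of_le hψ hsymm hsymm' hw hle

end Dirichlet

section AddEdge

variable [DecidableEq V] {w : V → V → ℝ}

theorem addEdge_symm (hsymm : ∀ x y, w x y = w y x) (a b : V) (u : ℝ) (x y : V) :
    addEdge w a b u x y = addEdge w a b u y x := by
  simp only [addEdge, hsymm x y, and_comm, or_comm]

theorem le_addEdge (w : V → V → ℝ) (a b : V) {u : ℝ} (hu : 0 ≤ u) : w ≤ addEdge w a b u := by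
  intro x y
  unfold addEdge
  split_ifs <;> linarith

end AddEdge

/-- Rayleigh monotonicity: adding an edge `{a,b}` of weight `u > 0`
(or increasing the weight of an existing edge by `u`) can only decrease the effective
resistance: `R'_{ij} ≤ R_{ij}` for all `i, j`. -/
theorem rayleigh_monotonicity
    {V : Type*} [Fintype V] [DecidableEq V] (w : V → V → ℝ) (hw : IsWeight w)
    (a b : V) (hab : a ≠ b) (u : ℝ) (hu : 0 < u)
    (R : V → V → ℝ) (hR : IsResistance w R)
    (R' : V → V → ℝ) (hR' : IsResistance (addEdge w a b u) R')
    (i j : V) :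
    R' i j ≤ R i j :=
  rayleigh_monotonicity_general hw.1 (addEdge_symm hw.1 a b u) hw.2.1
    (le_addEdge w a b hu.le) hR hR' i j
end
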